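/- Let X be uniformly distributed over a set A ⊆ {0,1}^n with |A| ≥ 2^{n-c} for some c ≥ 1, and let M be uniformly distributed over all α-matchings, for α ∈ (0, 1/4]. There exists a universal constant γ > 0 such that for all ε > 0: if c ≤ γε√(n/α), then E_M[ ∑_z |p_M(z) - 2^{-αn}| ] ≤ ε, where p_M(z) = |{x ∈ A : Mx = z}| / |A|. -/

import Mathlib

open Finset

open scoped Classical

def IsMatchingMatrix {m n : ℕ} (M : Matrix (Fin m) (Fin n) (ZMod 2)) : Prop :=
  (∀ ℓ, (Finset.univ.filter fun i => M ℓ i ≠ 0).card = 2) ∧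
  (∀ i, (Finset.univ.filter fun ℓ => M ℓ i ≠ 0).card ≤ 1)

/-!
Let `W d` be the sum of the squared Fourier coefficients, at vectors of weight `d`, of the uniform
distribution on `A`. By Cauchy-Schwarz and Parseval, the squared distance of `p_M` to uniform is at
most the sum of its squared nontrivial Fourier coefficients, and the coefficient of `p_M` at `s` is
that of `A` at `s M`. For a uniform matching `M`, the vector `s M` is uniform among the vectors of
weight `2 |s|`, so the expectation of this sum is
`∑ k ≥ 1, (m.choose k / n.choose (2 * k)) W (2 k)`.

Bonami's hypercontractive inequality with exponent `2 r`, tested on the level-`d` part of the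
Fourier transform of `A`, gives `W d ^ r ≤ 2 ^ c (2 r - 1) ^ (d r)`. The choice `r = ⌈c / k⌉` yields
`W (2 k) ≤ (18 (c / k) ^ 2) ^ k` for `k ≤ c`, and `r = 1` yields `W (2 k) ≤ 2 ^ k` for `k ≥ c`.
As `m.choose k / n.choose (2 * k)` is at most `(8 k m / n ^ 2) ^ k` and shrinks by a factor of at
least `4` at each step, the series is dominated by a geometric one with first term of order
`c ^ 2 m / n ^ 2`, which is at most a constant times `ε ^ 2`.
-/

section Binomial

lemma cast_choose_succ_mul {R : Type*} [Ring R] (n k : ℕ) :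
    (n.choose (k + 1) : R) * (k + 1) = n.choose k * (n - k) := by
  rcases le_or_gt k n with hkn | hkn
  · exact_mod_cast congrArg (Nat.cast (R := R)) (Nat.choose_succ_right_eq n k)
  · simp [Nat.choose_eq_zero_of_lt hkn, Nat.choose_eq_zero_of_lt (hkn.trans k.lt_succ_self)]

lemma cast_choose_two_mul_succ_mul {R : Type*} [CommRing R] (n k : ℕ) :
    (n.choose (2 * (k + 1)) : R) * ((2 * k + 1) * (2 * k + 2)) =
      n.choose (2 * k) * ((n - 2 * k) * (n - 2 * k - 1)) := by
  have odd_step := cast_choose_succ_mul (R := R) n (2 * k)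
  have even_step := cast_choose_succ_mul (R := R) n (2 * k + 1)
  push_cast at odd_step even_step
  rw [show 2 * (k + 1) = 2 * k + 1 + 1 by ring]
  linear_combination (2 * k + 1 : R) * even_step + (n - 2 * k - 1 : R) * odd_step

lemma choose_two_mul_le_pow_mul_choose {r : ℕ} (hr : 1 ≤ r) (j : ℕ) :
    ((2 * r).choose (2 * j) : ℝ) ≤ (2 * r - 1) ^ j * r.choose j := by
  have hr' : (1 : ℝ) ≤ r := mod_cast hr
  induction j with
  | zero => simp
  | succ j ih =>
    rcases le_or_gt r j with hrj | hjr
    · rw [Nat.choose_eq_zero_of_lt (by lia), Nat.choose_eq_zero_of_lt (by lia)]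
      simp
    have hjr' : (j : ℝ) + 1 ≤ r := mod_cast hjr
    have left_step := cast_choose_two_mul_succ_mul (R := ℝ) (2 * r) j
    have right_step := cast_choose_succ_mul (R := ℝ) r j
    push_cast at left_step
    have factor_le : (2 * r - 2 * j - 1 : ℝ) ≤ (2 * r - 1) * (2 * j + 1) := by
      nlinarith [j.cast_nonneg (α := ℝ)]
    refine le_of_mul_le_mul_right ?_ (show (0 : ℝ) < (2 * j + 1) * (2 * j + 2) by positivity)
    calc ((2 * r).choose (2 * (j + 1)) : ℝ) * ((2 * j + 1) * (2 * j + 2))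
        = (2 * r).choose (2 * j) * ((2 * r - 2 * j) * (2 * r - 2 * j - 1)) := left_step
      _ ≤ ((2 * r - 1) ^ j * r.choose j) *
            ((2 * r - 2 * j) * ((2 * r - 1) * (2 * j + 1))) := by
          have : (0 : ℝ) ≤ 2 * r - 1 := by linarith
          have : (0 : ℝ) ≤ 2 * r - 2 * j - 1 := by linarith
          have : (0 : ℝ) ≤ 2 * r - 2 * j := by linarith
          gcongr
      _ = (2 * r - 1) ^ (j + 1) * r.choose (j + 1) * ((2 * j + 1) * (2 * j + 2)) := by
          linear_combination (-2 * (2 * (r : ℝ) - 1) ^ (j + 1) * (2 * j + 1)) * right_step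

end Binomial

section TwoPoint

lemma sum_range_mul_one_add_neg_one_pow {R : Type*} [CommRing R] (f : ℕ → R) (r : ℕ) :
    ∑ i ∈ range (2 * r + 1), f i * (1 + (-1) ^ i) = 2 * ∑ j ∈ range (r + 1), f (2 * j) := by
  induction r with
  | zero => simp; ring
  | succ r ih =>
    rw [sum_range_succ _ (r + 1), mul_add 2 (∑ j ∈ _, _), ← ih,
      show 2 * (r + 1) + 1 = 2 * r + 1 + 1 + 1 by ring, sum_range_succ, sum_range_succ,
      show 2 * (r + 1) = 2 * r + 1 + 1 by ring]
    simp only [pow_succ, pow_mul]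
    ring

lemma add_pow_add_sub_pow {R : Type*} [CommRing R] (a b : R) (r : ℕ) :
    (a + b) ^ (2 * r) + (a - b) ^ (2 * r) =
      2 * ∑ j ∈ range (r + 1), (b ^ 2) ^ j * (a ^ 2) ^ (r - j) * (2 * r).choose (2 * j) := by
  have expand : (a + b) ^ (2 * r) + (a - b) ^ (2 * r) =
      ∑ i ∈ range (2 * r + 1),
        b ^ i * a ^ (2 * r - i) * (2 * r).choose i * (1 + (-1) ^ i) := by
    rw [add_comm a b, show a - b = -b + a by ring, add_pow, add_pow, ← sum_add_distrib]
    refine sum_congr rfl fun i _ ↦ ?_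
    rw [neg_pow b]
    ring
  rw [expand, sum_range_mul_one_add_neg_one_pow
    fun i ↦ b ^ i * a ^ (2 * r - i) * (2 * r).choose i]
  simp only [← Nat.mul_sub, pow_mul]

lemma add_pow_add_sub_pow_le {r : ℕ} (hr : 1 ≤ r) (a b : ℝ) :
    (a + b) ^ (2 * r) + (a - b) ^ (2 * r) ≤ 2 * (a ^ 2 + (2 * r - 1) * b ^ 2) ^ r := by
  rw [add_pow_add_sub_pow, add_comm (a ^ 2), add_pow]
  gcongr 2 * ∑ j ∈ range (r + 1), ?_ with j
  calc (b ^ 2) ^ j * (a ^ 2) ^ (r - j) * ((2 * r).choose (2 * j) : ℝ)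
      ≤ (b ^ 2) ^ j * (a ^ 2) ^ (r - j) * ((2 * r - 1) ^ j * r.choose j) := by
        gcongr
        exact choose_two_mul_le_pow_mul_choose hr j
    _ = ((2 * r - 1) * b ^ 2) ^ j * (a ^ 2) ^ (r - j) * r.choose j := by
        rw [mul_pow (2 * (r : ℝ) - 1)]
        ring

end TwoPoint

/-- Minkowski's inequality in `ℓʳ`; the normalisation by `N` avoids `r`-th roots. -/
lemma sum_add_pow_le_mul_add_pow {ι : Type*} {s : Finset ι} {r : ℕ} (hr : 1 ≤ r) {u v : ι → ℝ}
    (hu : ∀ i, 0 ≤ u i) (hv : ∀ i, 0 ≤ v i) {N U V : ℝ} (hN : 0 ≤ N) (hU : 0 ≤ U) (hV : 0 ≤ V)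
    (huU : ∑ i ∈ s, u i ^ r ≤ N * U ^ r) (hvV : ∑ i ∈ s, v i ^ r ≤ N * V ^ r) :
    ∑ i ∈ s, (u i + v i) ^ r ≤ N * (U + V) ^ r := by
  have hr0 : r ≠ 0 := by lia
  have root_le : ∀ {w : ι → ℝ} {W : ℝ}, (∀ i, 0 ≤ w i) → 0 ≤ W →
      ∑ i ∈ s, w i ^ r ≤ N * W ^ r →
      (∑ i ∈ s, w i ^ r) ^ (r⁻¹ : ℝ) ≤ N ^ (r⁻¹ : ℝ) * W := by
    intro w W hw hW hwW
    calc (∑ i ∈ s, w i ^ r) ^ (r⁻¹ : ℝ)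
        ≤ (N * W ^ r) ^ (r⁻¹ : ℝ) :=
          Real.rpow_le_rpow (sum_nonneg fun i _ ↦ pow_nonneg (hw i) r) hwW (by positivity)
      _ = N ^ (r⁻¹ : ℝ) * W := by
          rw [Real.mul_rpow hN (by positivity), Real.pow_rpow_inv_natCast hW hr0]
  have minkowski := Real.Lp_add_le_of_nonneg s (p := r) (mod_cast hr)
    (fun i _ ↦ hu i) (fun i _ ↦ hv i)
  simp only [Real.rpow_natCast, one_div] at minkowski
  have sum_nonneg' : 0 ≤ ∑ i ∈ s, (u i + v i) ^ r :=
    sum_nonneg fun i _ ↦ pow_nonneg (add_nonneg (hu i) (hv i)) r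
  calc ∑ i ∈ s, (u i + v i) ^ r
      = ((∑ i ∈ s, (u i + v i) ^ r) ^ (r⁻¹ : ℝ)) ^ r :=
        (Real.rpow_inv_natCast_pow sum_nonneg' hr0).symm
    _ ≤ (N ^ (r⁻¹ : ℝ) * (U + V)) ^ r := by
        gcongr
        linarith [root_le hu hU huU, root_le hv hV hvV]
    _ = N * (U + V) ^ r := by rw [mul_pow, Real.rpow_inv_natCast_pow hN hr0]

section WalshFourier

variable {ι κ : Type*} [Fintype ι] [Fintype κ]

/-- The nontrivial additive character `a ↦ (-1) ^ a` of `ZMod 2`, with real values. -/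
noncomputable def parity : AddChar (ZMod 2) ℝ :=
  AddChar.zmodChar 2 (ζ := -1) (by norm_num)

lemma parity_one : parity 1 = -1 := by
  simp [parity, AddChar.zmodChar_apply, ZMod.val_one]

/-- The Walsh function of `v`, that is, the character `x ↦ (-1) ^ (v ⬝ᵥ x)` of the cube. -/
noncomputable def walsh (v : ι → ZMod 2) : AddChar (ι → ZMod 2) ℝ where
  toFun x := parity (v ⬝ᵥ x)
  map_zero_eq_one' := by simp
  map_add_eq_mul' x y := by rw [dotProduct_add, AddChar.map_add_eq_mul]

lemma walsh_apply (v x : ι → ZMod 2) : walsh v x = parity (v ⬝ᵥ x) := rfl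

lemma walsh_comm (v x : ι → ZMod 2) : walsh v x = walsh x v := by
  rw [walsh_apply, walsh_apply, dotProduct_comm]

lemma walsh_eq_zero_iff {v : ι → ZMod 2} : walsh v = 0 ↔ v = 0 := by
  refine ⟨fun h ↦ funext fun i ↦ by_contra fun hi ↦ ?_, fun h ↦ by ext x; simp [h, walsh_apply]⟩
  have hvi : v i = 1 := Fin.eq_one_of_ne_zero (v i) hi
  have walsh_single : walsh v (Pi.single i 1) = -1 := by
    rw [walsh_apply, dotProduct_single, mul_one, hvi, parity_one]
  rw [h, AddChar.zero_apply] at walsh_single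
  norm_num at walsh_single

variable [DecidableEq ι] [DecidableEq κ]

/-- The real function on the cube with Walsh coefficients `a`. -/
noncomputable def walshPoly (a : (ι → ZMod 2) → ℝ) (x : ι → ZMod 2) : ℝ :=
  ∑ v, a v * walsh v x

lemma sum_walsh (v : ι → ZMod 2) :
    ∑ x, walsh v x = if v = 0 then 2 ^ Fintype.card ι else 0 := by
  simp [AddChar.sum_eq_ite, walsh_eq_zero_iff, ZMod.card]

lemma sum_walsh_mul_walsh (v w : ι → ZMod 2) :
    ∑ x, walsh v x * walsh w x = if v = w then 2 ^ Fintype.card ι else 0 := by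
  have walsh_add (x : ι → ZMod 2) : walsh v x * walsh w x = walsh (v + w) x := by
    simp only [walsh_apply, add_dotProduct, AddChar.map_add_eq_mul]
  simp only [walsh_add, sum_walsh, funext_iff, Pi.add_apply, Pi.zero_apply, CharTwo.add_eq_zero]

lemma sum_walshPoly_sq (a : (ι → ZMod 2) → ℝ) :
    ∑ x, walshPoly a x ^ 2 = 2 ^ Fintype.card ι * ∑ v, a v ^ 2 := by
  calc ∑ x, walshPoly a x ^ 2
      = ∑ x, ∑ v, ∑ w, a v * a w * (walsh v x * walsh w x) := by
        simp only [walshPoly, sq, sum_mul_sum, mul_mul_mul_comm]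
    _ = ∑ v, ∑ w, a v * a w * ∑ x, walsh v x * walsh w x := by
        rw [sum_comm]
        simp only [mul_sum]
        exact sum_congr rfl fun v _ ↦ sum_comm
    _ = 2 ^ Fintype.card ι * ∑ v, a v ^ 2 := by
        simp only [sum_walsh_mul_walsh, mul_ite, mul_zero, sum_ite_eq, mem_univ, if_true, mul_sum]
        exact sum_congr rfl fun v _ ↦ by ring

lemma walshPoly_comp_equiv (e : ι ≃ κ) (a : (ι → ZMod 2) → ℝ) (x : κ → ZMod 2) :
    walshPoly a (x ∘ e) = walshPoly (fun v ↦ a (v ∘ e)) x := by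
  refine (Fintype.sum_equiv (e.symm.arrowCongr (.refl (ZMod 2))) _ _ fun v ↦ ?_).symm
  change a (v ∘ e) * walsh v x = a (v ∘ e) * walsh (v ∘ e) (x ∘ e)
  rw [walsh_apply, walsh_apply, comp_equiv_dotProduct_comp_equiv]

lemma sum_abs_sub_inv_sq_le {p : (κ → ZMod 2) → ℝ} (hp : ∑ z, p z = 1) :
    (∑ z, |p z - (2 ^ Fintype.card κ : ℝ)⁻¹|) ^ 2 ≤
      ∑ s ∈ univ.erase (0 : κ → ZMod 2), walshPoly p s ^ 2 := by
  set u : ℝ := (2 ^ Fintype.card κ)⁻¹ with hu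
  have walshPoly_sub (s : κ → ZMod 2) :
      walshPoly (fun z ↦ p z - u) s = walshPoly p s - if s = 0 then 1 else 0 := by
    simp only [walshPoly, sub_mul, sum_sub_distrib, ← mul_sum, walsh_comm _ s, sum_walsh, hu]
    split_ifs <;> simp
  have walshPoly_zero : walshPoly p 0 = 1 := by
    simpa [walshPoly, AddChar.map_zero_eq_one] using hp
  calc (∑ z, |p z - u|) ^ 2
      ≤ #(univ : Finset (κ → ZMod 2)) * ∑ z, |p z - u| ^ 2 := sq_sum_le_card_mul_sum_sq
    _ = ∑ s, walshPoly (fun z ↦ p z - u) s ^ 2 := by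
        simp [sum_walshPoly_sq, sq_abs, ZMod.card]
    _ = ∑ s ∈ univ.erase 0, walshPoly p s ^ 2 := by
        rw [← add_sum_erase _ _ (mem_univ 0), walshPoly_sub, walshPoly_zero]
        simp only [if_true, sub_self, zero_pow two_ne_zero, zero_add]
        exact sum_congr rfl fun s hs ↦ by rw [walshPoly_sub, if_neg (ne_of_mem_erase hs), sub_zero]

end WalshFourier

section Hypercontractivity

lemma sum_fin_succ_zmod_two {M : Type*} [AddCommMonoid M] {n : ℕ}
    (f : (Fin (n + 1) → ZMod 2) → M) :
    ∑ v, f v = ∑ v : Fin n → ZMod 2, f (Fin.cons 0 v) + ∑ v : Fin n → ZMod 2, f (Fin.cons 1 v) := by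
  rw [← (Fin.consEquiv fun _ : Fin (n + 1) ↦ ZMod 2).sum_comp, Fintype.sum_prod_type]
  exact Fin.sum_univ_two _

lemma walshPoly_cons {n : ℕ} (a : (Fin (n + 1) → ZMod 2) → ℝ) (b : ZMod 2) (x : Fin n → ZMod 2) :
    walshPoly a (Fin.cons b x) =
      walshPoly (fun v ↦ a (Fin.cons 0 v)) x +
        parity b * walshPoly (fun v ↦ a (Fin.cons 1 v)) x := by
  have dotProduct_cons (c : ZMod 2) (v : Fin n → ZMod 2) :
      (Fin.cons c v : Fin (n + 1) → ZMod 2) ⬝ᵥ Fin.cons b x = c * b + v ⬝ᵥ x :=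
    Matrix.cons_dotProduct_cons c v b x
  simp only [walshPoly, sum_fin_succ_zmod_two, walsh_apply, dotProduct_cons,
    AddChar.map_add_eq_mul, zero_mul, one_mul, AddChar.map_zero_eq_one, mul_sum]
  simp only [mul_left_comm]

lemma hammingNorm_cons_zero {n : ℕ} (v : Fin n → ZMod 2) :
    hammingNorm (Fin.cons 0 v : Fin (n + 1) → ZMod 2) = hammingNorm v := by
  simp [hammingNorm, Fin.card_filter_univ_succ]

lemma hammingNorm_cons_one {n : ℕ} (v : Fin n → ZMod 2) :
    hammingNorm (Fin.cons 1 v : Fin (n + 1) → ZMod 2) = hammingNorm v + 1 := by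
  simp [hammingNorm, Fin.card_filter_univ_succ, add_comm]

lemma sum_pow_hammingNorm_cons {n : ℕ} (t : ℝ) (f : (Fin (n + 1) → ZMod 2) → ℝ) :
    ∑ v, t ^ hammingNorm v * f v =
      ∑ v : Fin n → ZMod 2, t ^ hammingNorm v * f (Fin.cons 0 v) +
        t * ∑ v : Fin n → ZMod 2, t ^ hammingNorm v * f (Fin.cons 1 v) := by
  simp only [sum_fin_succ_zmod_two, hammingNorm_cons_zero, hammingNorm_cons_one, pow_succ',
    mul_assoc, mul_sum]

lemma sum_walshPoly_pow_le_fin {r : ℕ} (hr : 1 ≤ r) {n : ℕ} (a : (Fin n → ZMod 2) → ℝ) :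
    ∑ x, walshPoly a x ^ (2 * r) ≤
      2 ^ n * (∑ v, (2 * r - 1 : ℝ) ^ hammingNorm v * a v ^ 2) ^ r := by
  have ht : (0 : ℝ) ≤ 2 * r - 1 := by linarith [show (1 : ℝ) ≤ r from mod_cast hr]
  induction n with
  | zero => simp [walshPoly, walsh_apply, hammingNorm, pow_mul]
  | succ n ih =>
    set P : ZMod 2 → (Fin n → ZMod 2) → ℝ := fun b ↦ walshPoly fun v ↦ a (Fin.cons b v)
    set S : ZMod 2 → ℝ := fun b ↦
      ∑ v : Fin n → ZMod 2, (2 * r - 1 : ℝ) ^ hammingNorm v * a (Fin.cons b v) ^ 2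
    have S_nonneg (b : ZMod 2) : 0 ≤ S b := sum_nonneg fun v _ ↦ by positivity
    have ih_sq (b : ZMod 2) : ∑ x, (P b x ^ 2) ^ r ≤ 2 ^ n * S b ^ r := by
      simpa only [← pow_mul] using ih fun v ↦ a (Fin.cons b v)
    calc ∑ x, walshPoly a x ^ (2 * r)
        = ∑ x, ((P 0 x + P 1 x) ^ (2 * r) + (P 0 x - P 1 x) ^ (2 * r)) := by
          simp only [sum_fin_succ_zmod_two, walshPoly_cons, AddChar.map_zero_eq_one, parity_one,
            one_mul, neg_one_mul, ← sub_eq_add_neg, sum_add_distrib, P]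
      _ ≤ ∑ x, 2 * (P 0 x ^ 2 + (2 * r - 1) * P 1 x ^ 2) ^ r := by
          gcongr
          exact add_pow_add_sub_pow_le hr _ _
      _ = 2 * ∑ x, (P 0 x ^ 2 + (2 * r - 1) * P 1 x ^ 2) ^ r := by rw [mul_sum]
      _ ≤ 2 * (2 ^ n * (S 0 + (2 * r - 1) * S 1) ^ r) := by
          gcongr
          refine sum_add_pow_le_mul_add_pow hr (fun x ↦ by positivity) (fun x ↦ by positivity)
            (by positivity) (S_nonneg 0) (mul_nonneg ht (S_nonneg 1)) (ih_sq 0) ?_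
          simp only [mul_pow _ (_ ^ 2), mul_pow _ (S 1), ← mul_sum]
          rw [mul_left_comm]
          gcongr
          exact ih_sq 1
      _ = 2 ^ (n + 1) * (∑ v, (2 * r - 1 : ℝ) ^ hammingNorm v * a v ^ 2) ^ r := by
          rw [sum_pow_hammingNorm_cons, pow_succ', mul_assoc]

variable {ι κ : Type*} [Fintype ι] [Fintype κ]

lemma hammingNorm_comp_equiv (e : ι ≃ κ) (v : κ → ZMod 2) :
    hammingNorm (v ∘ e) = hammingNorm v :=
  card_equiv e fun i ↦ by simp

variable [DecidableEq ι]

lemma sum_walshPoly_pow_le {r : ℕ} (hr : 1 ≤ r) (a : (ι → ZMod 2) → ℝ) :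
    ∑ x, walshPoly a x ^ (2 * r) ≤
      2 ^ Fintype.card ι * (∑ v, (2 * r - 1 : ℝ) ^ hammingNorm v * a v ^ 2) ^ r := by
  let e := Fintype.equivFin ι
  let reindex : (Fin (Fintype.card ι) → ZMod 2) ≃ (ι → ZMod 2) :=
    e.symm.arrowCongr (.refl (ZMod 2))
  have reindex_apply (v : Fin (Fintype.card ι) → ZMod 2) : reindex v = v ∘ e := rfl
  simpa only [← reindex.sum_comp, reindex_apply, walshPoly_comp_equiv, hammingNorm_comp_equiv]
    using sum_walshPoly_pow_le_fin hr fun v ↦ a (v ∘ e)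

end Hypercontractivity

section LevelInequality

variable {ι : Type*} [Fintype ι]

/-- The Fourier coefficient at `v` of the uniform distribution on `A`: the expectation of
`walsh v x` for `x` uniform in `A`. -/
noncomputable def bias (A : Finset (ι → ZMod 2)) (v : ι → ZMod 2) : ℝ :=
  (∑ x ∈ A, walsh v x) / #A

variable [DecidableEq ι] {A : Finset (ι → ZMod 2)}

/-- The Fourier weight at level `d` of the uniform distribution on `A`. -/
noncomputable def levelWeight (A : Finset (ι → ZMod 2)) (d : ℕ) : ℝ :=
  ∑ v with hammingNorm v = d, bias A v ^ 2

lemma levelWeight_nonneg (A : Finset (ι → ZMod 2)) (d : ℕ) : 0 ≤ levelWeight A d :=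
  sum_nonneg fun _ _ ↦ sq_nonneg _

lemma sum_mul_bias (A : Finset (ι → ZMod 2)) (a : (ι → ZMod 2) → ℝ) :
    ∑ v, a v * bias A v = (∑ x ∈ A, walshPoly a x) / #A := by
  simp only [bias, walshPoly, sum_comm (s := A), ← mul_sum, sum_div, mul_div_assoc]

lemma sum_mul_bias_pow_le (hA : A.Nonempty) {r : ℕ} (hr : 1 ≤ r) (a : (ι → ZMod 2) → ℝ) :
    (∑ v, a v * bias A v) ^ (2 * r) ≤
      2 ^ Fintype.card ι / #A * (∑ v, (2 * r - 1 : ℝ) ^ hammingNorm v * a v ^ 2) ^ r := by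
  have hcard : (#A : ℝ) ≠ 0 := mod_cast hA.card_ne_zero
  have jensen : ((∑ x ∈ A, walshPoly a x) / #A) ^ (2 * r) ≤
      (∑ x ∈ A, walshPoly a x ^ (2 * r)) / #A := by
    simpa only [inv_mul_eq_div, ← sum_div] using
      Real.pow_arith_mean_le_arith_mean_pow_of_even A (fun _ ↦ (#A : ℝ)⁻¹) (walshPoly a)
        (fun _ _ ↦ by positivity) (by simp [hcard]) (even_two_mul r)
  calc (∑ v, a v * bias A v) ^ (2 * r)
      ≤ (∑ x ∈ A, walshPoly a x ^ (2 * r)) / #A := (sum_mul_bias A a).symm ▸ jensen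
    _ ≤ (∑ x, walshPoly a x ^ (2 * r)) / #A := by
        gcongr
        · intro x _ _
          exact (even_two_mul r).pow_nonneg _
        · exact subset_univ A
    _ ≤ 2 ^ Fintype.card ι * (∑ v, (2 * r - 1 : ℝ) ^ hammingNorm v * a v ^ 2) ^ r / #A := by
        gcongr
        exact sum_walshPoly_pow_le hr a
    _ = 2 ^ Fintype.card ι / #A * (∑ v, (2 * r - 1 : ℝ) ^ hammingNorm v * a v ^ 2) ^ r := by
        ring

lemma levelWeight_pow_le (hA : A.Nonempty) {r : ℕ} (hr : 1 ≤ r) (d : ℕ) :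
    levelWeight A d ^ r ≤ 2 ^ Fintype.card ι / #A * ((2 * r - 1 : ℝ) ^ d) ^ r := by
  have ht : (0 : ℝ) ≤ 2 * r - 1 := by linarith [show (1 : ℝ) ≤ r from mod_cast hr]
  rcases (levelWeight_nonneg A d).eq_or_lt with hW | hW
  · rw [← hW, zero_pow (by lia)]
    positivity
  let a : (ι → ZMod 2) → ℝ := fun v ↦ if hammingNorm v = d then bias A v else 0
  have sum_a_mul_bias : ∑ v, a v * bias A v = levelWeight A d := by
    simp only [a, levelWeight, sum_filter, ite_mul, zero_mul, sq]
  have sum_pow_mul_a_sq :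
      ∑ v, (2 * r - 1 : ℝ) ^ hammingNorm v * a v ^ 2 = (2 * r - 1) ^ d * levelWeight A d := by
    rw [levelWeight, sum_filter, mul_sum]
    refine sum_congr rfl fun v _ ↦ ?_
    by_cases hv : hammingNorm v = d <;> simp [a, hv]
  have moment := sum_mul_bias_pow_le hA hr a
  rw [sum_a_mul_bias, sum_pow_mul_a_sq, two_mul, pow_add, mul_pow, ← mul_assoc] at moment
  exact le_of_mul_le_mul_right moment (by positivity)

lemma levelWeight_two_mul_le {c : ℝ} (hA : (2 : ℝ) ^ (Fintype.card ι - c) ≤ #A) {k r : ℕ}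
    (hr : 1 ≤ r) (hkr : c ≤ k * r) : levelWeight A (2 * k) ≤ (2 * (2 * r - 1) ^ 2) ^ k := by
  have ht : (0 : ℝ) ≤ 2 * r - 1 := by linarith [show (1 : ℝ) ≤ r from mod_cast hr]
  have hcard : (0 : ℝ) < #A := (Real.rpow_pos_of_pos two_pos _).trans_le hA
  have inv_density_le : 2 ^ Fintype.card ι / (#A : ℝ) ≤ (2 ^ k) ^ r := by
    calc (2 : ℝ) ^ Fintype.card ι / #A
        ≤ 2 ^ Fintype.card ι / (2 : ℝ) ^ (Fintype.card ι - c) := by gcongr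
      _ = (2 : ℝ) ^ c := by
          rw [Real.rpow_sub two_pos, Real.rpow_natCast, div_div_cancel₀ (by positivity)]
      _ ≤ (2 : ℝ) ^ ((k * r : ℕ) : ℝ) := by
          gcongr
          · exact one_le_two
          · exact_mod_cast hkr
      _ = (2 ^ k) ^ r := by rw [Real.rpow_natCast, pow_mul]
  refine le_of_pow_le_pow_left₀ (n := r) (by lia) (by positivity) ?_
  calc levelWeight A (2 * k) ^ r
      ≤ 2 ^ Fintype.card ι / #A * ((2 * r - 1 : ℝ) ^ (2 * k)) ^ r :=
        levelWeight_pow_le (card_pos.1 (mod_cast hcard)) hr (2 * k)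
    _ ≤ (2 ^ k) ^ r * ((2 * r - 1 : ℝ) ^ (2 * k)) ^ r := by gcongr
    _ = ((2 * (2 * r - 1) ^ 2) ^ k) ^ r := by rw [← mul_pow, pow_mul (_ - 1), ← mul_pow]

lemma levelWeight_two_mul_le_of_le {c : ℝ} (hA : (2 : ℝ) ^ (Fintype.card ι - c) ≤ #A) {k : ℕ}
    (hck : c ≤ k) : levelWeight A (2 * k) ≤ 2 ^ k := by
  have h := levelWeight_two_mul_le hA le_rfl (r := 1) (by simpa using hck)
  norm_num at h
  exact h

lemma levelWeight_two_mul_le_of_ge {c : ℝ} (hA : (2 : ℝ) ^ (Fintype.card ι - c) ≤ #A) {k : ℕ}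
    (hk : 1 ≤ k) (hkc : k ≤ c) : levelWeight A (2 * k) ≤ (18 * (c / k) ^ 2) ^ k := by
  have hk0 : (0 : ℝ) < k := mod_cast hk
  have one_le : 1 ≤ c / k := (one_le_div hk0).2 hkc
  set r := ⌈c / k⌉₊
  have hr : 1 ≤ r := Nat.one_le_ceil_iff.2 (by linarith)
  have hkr : c ≤ k * r := (div_le_iff₀' hk0).1 (Nat.le_ceil _)
  have hr_lt : (r : ℝ) < c / k + 1 := Nat.ceil_lt_add_one (by linarith)
  have hr' : (1 : ℝ) ≤ r := mod_cast hr
  calc levelWeight A (2 * k)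
      ≤ (2 * (2 * r - 1) ^ 2) ^ k := levelWeight_two_mul_le hA hr hkr
    _ ≤ (2 * (3 * (c / k)) ^ 2) ^ k := by
        have : (0 : ℝ) ≤ 2 * r - 1 := by linarith
        gcongr
        linarith
    _ = (18 * (c / k) ^ 2) ^ k := by
        congr 1
        ring

end LevelInequality

section ImageDistribution

open scoped Matrix

variable {ι κ : Type*} [Fintype ι] [Fintype κ]

/-- The distribution `p_M` of `M *ᵥ x` for `x` uniform in `A`. -/
noncomputable def imageDist (A : Finset (ι → ZMod 2)) (M : Matrix κ ι (ZMod 2)) (z : κ → ZMod 2) :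
    ℝ :=
  #{x ∈ A | M *ᵥ x = z} / #A

variable [DecidableEq κ] {A : Finset (ι → ZMod 2)}

/-- The `ℓ¹` distance between the distribution of `M *ᵥ x`, for `x` uniform in `A`, and the uniform
distribution on the cube. -/
noncomputable def distUniform (A : Finset (ι → ZMod 2)) (M : Matrix κ ι (ZMod 2)) : ℝ :=
  ∑ z, |imageDist A M z - (2 ^ Fintype.card κ : ℝ)⁻¹|

lemma sum_imageDist_mul (A : Finset (ι → ZMod 2)) (M : Matrix κ ι (ZMod 2))
    (g : (κ → ZMod 2) → ℝ) :
    ∑ z, imageDist A M z * g z = (∑ x ∈ A, g (M *ᵥ x)) / #A := by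
  simp only [imageDist, div_mul_eq_mul_div, ← sum_div, ← nsmul_eq_mul, ← sum_const]
  rw [sum_fiberwise']

lemma sum_imageDist (hA : A.Nonempty) (M : Matrix κ ι (ZMod 2)) : ∑ z, imageDist A M z = 1 := by
  simpa [hA.ne_empty] using sum_imageDist_mul A M 1

lemma walshPoly_imageDist (A : Finset (ι → ZMod 2)) (M : Matrix κ ι (ZMod 2)) (s : κ → ZMod 2) :
    walshPoly (imageDist A M) s = bias A (s ᵥ* M) := by
  simp only [walshPoly, walsh_comm _ s, sum_imageDist_mul, bias, walsh_apply,
    Matrix.dotProduct_mulVec]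

lemma distUniform_sq_le (hA : A.Nonempty) (M : Matrix κ ι (ZMod 2)) :
    distUniform A M ^ 2 ≤ ∑ s ∈ univ.erase (0 : κ → ZMod 2), bias A (s ᵥ* M) ^ 2 := by
  simpa only [distUniform, walshPoly_imageDist] using sum_abs_sub_inv_sq_le (sum_imageDist hA M)

lemma distUniform_le_two (hA : A.Nonempty) (M : Matrix κ ι (ZMod 2)) : distUniform A M ≤ 2 := by
  have imageDist_nonneg (z : κ → ZMod 2) : 0 ≤ imageDist A M z := by
    rw [imageDist]
    positivity
  calc distUniform A M
      ≤ ∑ z, (|imageDist A M z| + |(2 ^ Fintype.card κ : ℝ)⁻¹|) :=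
        sum_le_sum fun z _ ↦ abs_sub _ _
    _ = 2 := by
        simp [sum_add_distrib, abs_of_nonneg, imageDist_nonneg, sum_imageDist hA, ZMod.card,
          one_add_one_eq_two]

end ImageDistribution

section CubeCounting

variable {ι : Type*} [Fintype ι]

lemma exists_perm_of_hammingNorm_eq {v w : ι → ZMod 2} (h : hammingNorm v = hammingNorm w) :
    ∃ σ : Equiv.Perm ι, v = w ∘ σ := by
  have card_support_eq : Fintype.card {i // v i ≠ 0} = Fintype.card {i // w i ≠ 0} := by
    rwa [Fintype.card_subtype, Fintype.card_subtype]
  let e : {i // v i ≠ 0} ≃ {i // w i ≠ 0} := Fintype.equivOfCardEq card_support_eq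
  refine ⟨e.extendSubtype, funext fun i ↦ ?_⟩
  by_cases hi : v i = 0
  · rw [hi, Function.comp_apply, not_not.1 (e.extendSubtype_not_mem i (not_not.2 hi))]
  · exact (Fin.eq_one_of_ne_zero (v i) hi).trans
      (Fin.eq_one_of_ne_zero (w _) (e.extendSubtype_mem i hi)).symm

variable [DecidableEq ι]

lemma sum_apply_hammingNorm {M : Type*} [AddCommMonoid M] (f : ℕ → M) :
    ∑ v : ι → ZMod 2, f (hammingNorm v) =
      ∑ k ∈ range (Fintype.card ι + 1), (Fintype.card ι).choose k • f k := by
  rw [← card_univ, ← sum_powerset_apply_card, powerset_univ]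
  refine sum_nbij' (fun v ↦ ({i | v i ≠ 0} : Finset ι)) (fun s i ↦ if i ∈ s then 1 else 0)
    (by simp) (by simp) (fun v _ ↦ funext fun i ↦ ?_) (by simp) (fun v _ ↦ rfl)
  by_cases hi : v i = 0
  · simp [hi]
  · have hvi : v i = 1 := Fin.eq_one_of_ne_zero (v i) hi
    simp [hvi]

lemma card_hammingNorm_eq (d : ℕ) :
    #{v : ι → ZMod 2 | hammingNorm v = d} = (Fintype.card ι).choose d := by
  rw [card_filter, sum_apply_hammingNorm fun k ↦ if k = d then 1 else 0]
  simpa using fun h ↦ (Nat.choose_eq_zero_of_lt h).symm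

lemma sum_erase_zero_apply_hammingNorm {M : Type*} [AddCommGroup M] (f : ℕ → M) :
    ∑ v ∈ univ.erase (0 : ι → ZMod 2), f (hammingNorm v) =
      ∑ k ∈ range (Fintype.card ι), (Fintype.card ι).choose (k + 1) • f (k + 1) := by
  rw [sum_erase_eq_sub (mem_univ _), sum_apply_hammingNorm, sum_range_succ']
  simp

end CubeCounting

lemma card_mul_sum_comp_of_card_fiber_eq {α β R : Type*} [DecidableEq β] [CommSemiring R]
    {s : Finset α} {t : Finset β} {f : α → β} (hf : ∀ a ∈ s, f a ∈ t)
    (hfiber : ∀ b ∈ t, ∀ b' ∈ t, #{a ∈ s | f a = b} = #{a ∈ s | f a = b'}) (g : β → R) :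
    (#t * ∑ a ∈ s, g (f a) : R) = #s * ∑ b ∈ t, g b := by
  rw [← sum_fiberwise_of_maps_to' hf, mul_sum, mul_sum]
  refine sum_congr rfl fun b hb ↦ ?_
  have card_eq : #s = #t * #{a ∈ s | f a = b} := by
    rw [card_eq_sum_card_fiberwise hf, sum_congr rfl fun b' hb' ↦ hfiber b' hb' b hb, sum_const,
      smul_eq_mul]
  rw [sum_const, nsmul_eq_mul, card_eq, Nat.cast_mul, mul_assoc]

section Matchings

open scoped Matrix

variable {m n : ℕ} {M : Matrix (Fin m) (Fin n) (ZMod 2)}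

lemma IsMatchingMatrix.hammingNorm_vecMul (hM : IsMatchingMatrix M) (s : Fin m → ZMod 2) :
    hammingNorm (s ᵥ* M) = 2 * hammingNorm s := by
  have edge_unique {i : Fin n} {ℓ ℓ' : Fin m} (h : M ℓ i ≠ 0) (h' : M ℓ' i ≠ 0) : ℓ = ℓ' :=
    card_le_one.1 (hM.2 i) ℓ (by simpa using h) ℓ' (by simpa using h')
  have support_eq : ({i | (s ᵥ* M) i ≠ 0} : Finset (Fin n)) =
      ({ℓ | s ℓ ≠ 0} : Finset (Fin m)).biUnion fun ℓ ↦ {i | M ℓ i ≠ 0} := by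
    ext i
    simp only [mem_filter, mem_univ, true_and, mem_biUnion, Matrix.vecMul, dotProduct]
    constructor
    · intro h
      obtain ⟨ℓ, -, hℓ⟩ := exists_ne_zero_of_sum_ne_zero h
      exact ⟨ℓ, left_ne_zero_of_mul hℓ, right_ne_zero_of_mul hℓ⟩
    · rintro ⟨ℓ, hs, hℓ⟩
      rw [Fintype.sum_eq_single ℓ fun ℓ' hne ↦ by_contra fun h ↦
        hne (edge_unique (right_ne_zero_of_mul h) hℓ)]
      exact mul_ne_zero hs hℓ
  have edges_disjoint : ∀ ℓ ∈ ({ℓ | s ℓ ≠ 0} : Finset (Fin m)), ∀ ℓ' ∈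
      ({ℓ | s ℓ ≠ 0} : Finset (Fin m)), ℓ ≠ ℓ' →
      Disjoint ({i | M ℓ i ≠ 0} : Finset (Fin n)) ({i | M ℓ' i ≠ 0} : Finset (Fin n)) := by
    refine fun ℓ _ ℓ' _ hne ↦ disjoint_left.2 fun i hi hi' ↦ hne ?_
    exact edge_unique (by simpa using hi) (by simpa using hi')
  rw [hammingNorm, support_eq, card_biUnion edges_disjoint, sum_congr rfl fun ℓ _ ↦ hM.1 ℓ,
    sum_const, smul_eq_mul, mul_comm, hammingNorm]

lemma IsMatchingMatrix.submatrix (hM : IsMatchingMatrix M) (σ : Equiv.Perm (Fin n)) :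
    IsMatchingMatrix (M.submatrix id σ) :=
  ⟨fun ℓ ↦ (hammingNorm_comp_equiv σ (M ℓ)).trans (hM.1 ℓ), fun i ↦ hM.2 (σ i)⟩

/-- The matchings with `m` ordered edges on `n` vertices. -/
noncomputable def matchings (m n : ℕ) : Finset (Matrix (Fin m) (Fin n) (ZMod 2)) :=
  {M | IsMatchingMatrix M}

lemma mem_matchings : M ∈ matchings m n ↔ IsMatchingMatrix M := by
  simp [matchings]

lemma card_matchings_vecMul_eq_le (s : Fin m → ZMod 2) {v w : Fin n → ZMod 2}
    (h : hammingNorm v = hammingNorm w) :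
    #{M ∈ matchings m n | s ᵥ* M = w} ≤ #{M ∈ matchings m n | s ᵥ* M = v} := by
  obtain ⟨σ, rfl⟩ := exists_perm_of_hammingNorm_eq h
  refine card_le_card_of_injOn (fun M ↦ M.submatrix id σ) (fun M hM ↦ ?_) fun M _ M' _ hMM' ↦ ?_
  · obtain ⟨hM_mem, rfl⟩ := mem_filter.1 (mem_coe.1 hM)
    exact mem_filter.2 ⟨mem_matchings.2 ((mem_matchings.1 hM_mem).submatrix σ), rfl⟩
  · ext ℓ i
    simpa using congrFun₂ hMM' ℓ (σ.symm i)

lemma sum_matchings_bias_vecMul_sq (hmn : 2 * m ≤ n) (A : Finset (Fin n → ZMod 2))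
    (s : Fin m → ZMod 2) :
    ∑ M ∈ matchings m n, bias A (s ᵥ* M) ^ 2 =
      #(matchings m n) *
        (levelWeight A (2 * hammingNorm s) / n.choose (2 * hammingNorm s)) := by
  have hs : hammingNorm s ≤ m := by simpa using hammingNorm_le_card_fintype (x := s)
  have hchoose : (n.choose (2 * hammingNorm s) : ℝ) ≠ 0 :=
    mod_cast (Nat.choose_pos (by lia)).ne'
  have uniform := card_mul_sum_comp_of_card_fiber_eq (s := matchings m n)
    (t := {v : Fin n → ZMod 2 | hammingNorm v = 2 * hammingNorm s}) (f := (s ᵥ* ·))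
    (fun M hM ↦ by simpa using (mem_matchings.1 hM).hammingNorm_vecMul s)
    (fun v hv w hw ↦ by
      have hvw : hammingNorm v = hammingNorm w :=
        (mem_filter.1 hv).2.trans (mem_filter.1 hw).2.symm
      exact le_antisymm (card_matchings_vecMul_eq_le s hvw.symm)
        (card_matchings_vecMul_eq_le s hvw))
    (bias A · ^ 2)
  rw [card_hammingNorm_eq, Fintype.card_fin] at uniform
  rw [mul_div_assoc', eq_div_iff hchoose, mul_comm, uniform, levelWeight]

/-- The probability that a fixed set of `2 * k` vertices is the union of `k` edges of a uniform
matching with `m` edges on `n` vertices. -/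
noncomputable def matchingRatio (m n k : ℕ) : ℝ :=
  m.choose k / n.choose (2 * k)

/-- The expectation of `distUniform A M` over a uniform matching `M` with `m` edges. -/
noncomputable def meanDistUniform (m : ℕ) (A : Finset (Fin n → ZMod 2)) : ℝ :=
  (∑ M ∈ matchings m n, distUniform A M) / #(matchings m n)

lemma meanDistUniform_le_two {A : Finset (Fin n → ZMod 2)} (hA : A.Nonempty) :
    meanDistUniform m A ≤ 2 := by
  refine div_le_of_le_mul₀ (by positivity) (by norm_num) ?_
  rw [mul_comm, ← nsmul_eq_mul]
  exact sum_le_card_nsmul _ _ 2 fun M _ ↦ distUniform_le_two hA M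

lemma meanDistUniform_sq_le (hmn : 2 * m ≤ n) {A : Finset (Fin n → ZMod 2)} (hA : A.Nonempty) :
    meanDistUniform m A ^ 2 ≤
      ∑ k ∈ range m, matchingRatio m n (k + 1) * levelWeight A (2 * (k + 1)) := by
  calc meanDistUniform m A ^ 2
      ≤ (∑ M ∈ matchings m n, distUniform A M ^ 2) / #(matchings m n) :=
        sum_div_card_sq_le_sum_sq_div_card
    _ ≤ (∑ M ∈ matchings m n, ∑ s ∈ univ.erase (0 : Fin m → ZMod 2), bias A (s ᵥ* M) ^ 2) /
          #(matchings m n) := by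
        gcongr with M
        exact distUniform_sq_le hA M
    _ = #(matchings m n) * (∑ s ∈ univ.erase (0 : Fin m → ZMod 2),
          levelWeight A (2 * hammingNorm s) / n.choose (2 * hammingNorm s)) /
            #(matchings m n) := by
        rw [sum_comm, mul_sum]
        simp only [sum_matchings_bias_vecMul_sq hmn]
    _ ≤ ∑ s ∈ univ.erase (0 : Fin m → ZMod 2),
          levelWeight A (2 * hammingNorm s) / n.choose (2 * hammingNorm s) :=
        div_le_of_le_mul₀ (by positivity)
          (sum_nonneg fun s _ ↦ div_nonneg (levelWeight_nonneg A _) (by positivity))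
          (mul_comm _ _).le
    _ = ∑ k ∈ range m, matchingRatio m n (k + 1) * levelWeight A (2 * (k + 1)) := by
        rw [sum_erase_zero_apply_hammingNorm fun k ↦ levelWeight A (2 * k) / n.choose (2 * k),
          Fintype.card_fin]
        exact sum_congr rfl fun k _ ↦ by rw [matchingRatio, nsmul_eq_mul, mul_div_left_comm,
          mul_comm]

end Matchings

section Estimates

variable {m n k : ℕ}

lemma matchingRatio_le_pow (hkn : 4 * k ≤ n) : matchingRatio m n k ≤ (8 * k * m / n ^ 2) ^ k := by
  rcases n.eq_zero_or_pos with rfl | hn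
  · simp [show k = 0 by lia, matchingRatio]
  have half_le : (n / 2 : ℝ) ≤ (n + 1 - 2 * k : ℕ) := by
    rw [Nat.cast_sub (by lia)]
    push_cast
    linarith [show (4 : ℝ) * k ≤ n from mod_cast hkn]
  have factorial_le : ((2 * k).factorial : ℝ) ≤ (2 * k) ^ k * k.factorial :=
    mod_cast Nat.factorial_two_mul_le k
  calc matchingRatio m n k
      ≤ (m ^ k / k.factorial) / ((n / 2) ^ (2 * k) / (2 * k).factorial) := by
        rw [matchingRatio]
        gcongr
        · exact Nat.choose_le_pow_div k m
        · exact le_trans (by gcongr) (Nat.pow_le_choose (2 * k) n)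
    _ = m ^ k * (2 * k).factorial / (k.factorial * (n / 2) ^ (2 * k)) := div_div_div_eq _ _ _ _
    _ ≤ m ^ k * ((2 * k) ^ k * k.factorial) / (k.factorial * (n / 2) ^ (2 * k)) := by gcongr
    _ = (8 * k * m / n ^ 2) ^ k := by
        rw [pow_mul, ← mul_assoc, ← mul_pow, mul_comm (k.factorial : ℝ),
          mul_div_mul_right _ _ (by positivity), ← div_pow]
        congr 1
        field

lemma matchingRatio_succ_le (hmn : 4 * m ≤ n) (hk : k < m) :
    matchingRatio m n (k + 1) ≤ matchingRatio m n k * (1 / 4) := by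
  have hmn' : (4 : ℝ) * m ≤ n := mod_cast hmn
  have hk' : (k : ℝ) + 1 ≤ m := mod_cast hk
  have m_step := cast_choose_succ_mul (R := ℝ) m k
  have n_step := cast_choose_two_mul_succ_mul (R := ℝ) n k
  have choose_pos : (0 : ℝ) < n.choose (2 * k) := mod_cast Nat.choose_pos (by lia)
  have choose_succ_pos : (0 : ℝ) < n.choose (2 * (k + 1)) := mod_cast Nat.choose_pos (by lia)
  have factor_le : 8 * (2 * k + 1 : ℝ) * (m - k) ≤ (n - 2 * k) * (n - 2 * k - 1) := by
    nlinarith [mul_nonneg (show (0 : ℝ) ≤ 2 * k + 1 by positivity) (sub_nonneg.2 hmn'),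
      sq_nonneg (n - 4 * k - 4 : ℝ), sq_nonneg (4 * k - 1 : ℝ)]
  rw [matchingRatio, matchingRatio, div_mul_div_comm,
    div_le_div_iff₀ choose_succ_pos (by positivity)]
  refine le_of_mul_le_mul_right ?_ (show (0 : ℝ) < (2 * k + 1) * (2 * k + 2) by positivity)
  calc m.choose (k + 1) * (n.choose (2 * k) * 4) * ((2 * k + 1) * (2 * k + 2) : ℝ)
      = m.choose k * n.choose (2 * k) * (8 * (2 * k + 1) * (m - k)) := by
        linear_combination (8 * n.choose (2 * k) * (2 * k + 1) : ℝ) * m_step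
    _ ≤ m.choose k * n.choose (2 * k) * ((n - 2 * k) * (n - 2 * k - 1)) := by gcongr
    _ = m.choose k * 1 * n.choose (2 * (k + 1)) * ((2 * k + 1) * (2 * k + 2)) := by
        linear_combination -(m.choose k : ℝ) * n_step

lemma matchingRatio_succ_le_geometric (hmn : 4 * m ≤ n) (hk : k < m) :
    matchingRatio m n (k + 1) ≤ 8 * m / n ^ 2 * (1 / 4) ^ k := by
  induction k with
  | zero => simpa using matchingRatio_le_pow (m := m) (n := n) (k := 1) (by lia)
  | succ k ih =>
    calc matchingRatio m n (k + 1 + 1)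
        ≤ matchingRatio m n (k + 1) * (1 / 4) := matchingRatio_succ_le hmn hk
      _ ≤ 8 * m / n ^ 2 * (1 / 4) ^ k * (1 / 4) := by
          gcongr
          exact ih (by lia)
      _ = 8 * m / n ^ 2 * (1 / 4) ^ (k + 1) := by ring

variable {c : ℝ} {A : Finset (Fin n → ZMod 2)}

lemma matchingRatio_mul_levelWeight_le (hmn : 4 * m ≤ n) (hc : 1 ≤ c)
    (hA : (2 : ℝ) ^ (n - c) ≤ #A) (hx : 144 * c ^ 2 * m / n ^ 2 ≤ 1 / 2) (hk : k < m) :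
    matchingRatio m n (k + 1) * levelWeight A (2 * (k + 1)) ≤
      144 * c ^ 2 * m / n ^ 2 * (1 / 2) ^ k := by
  have hA' : (2 : ℝ) ^ (Fintype.card (Fin n) - c) ≤ #A := by rwa [Fintype.card_fin]
  have weight_nonneg := levelWeight_nonneg A (2 * (k + 1))
  rcases le_total ((k + 1 : ℕ) : ℝ) c with hkc | hck
  · calc matchingRatio m n (k + 1) * levelWeight A (2 * (k + 1))
        ≤ (8 * (k + 1 : ℕ) * m / n ^ 2) ^ (k + 1) * (18 * (c / (k + 1 : ℕ)) ^ 2) ^ (k + 1) := by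
          gcongr
          · exact matchingRatio_le_pow (by lia)
          · exact levelWeight_two_mul_le_of_ge hA' k.succ_pos hkc
      _ = (144 * c ^ 2 * m / n ^ 2 / (k + 1 : ℕ)) ^ (k + 1) := by
          rw [← mul_pow]
          congr 1
          field
      _ ≤ (144 * c ^ 2 * m / n ^ 2) ^ (k + 1) := by
          gcongr ?_ ^ (k + 1)
          exact div_le_self (by positivity) (Nat.one_le_cast.2 k.succ_pos)
      _ ≤ 144 * c ^ 2 * m / n ^ 2 * (1 / 2) ^ k := by
          rw [pow_succ']
          gcongr
  · calc matchingRatio m n (k + 1) * levelWeight A (2 * (k + 1))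
        ≤ 8 * m / n ^ 2 * (1 / 4) ^ k * 2 ^ (k + 1) := by
          gcongr
          · exact matchingRatio_succ_le_geometric hmn hk
          · exact levelWeight_two_mul_le_of_le hA' hck
      _ = 16 * 1 ^ 2 * m / n ^ 2 * (1 / 2) ^ k := by
          rw [show (1 / 2 : ℝ) = 1 / 4 * 2 by norm_num, mul_pow]
          ring
      _ ≤ 144 * c ^ 2 * m / n ^ 2 * (1 / 2) ^ k := by
          gcongr
          norm_num

lemma meanDistUniform_sq_le_of_rpow_le_card (hmn : 4 * m ≤ n) (hc : 1 ≤ c)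
    (hA : (2 : ℝ) ^ (n - c) ≤ #A) :
    meanDistUniform m A ^ 2 ≤
      1152 * c ^ 2 * m / n ^ 2 := by
  have hcard : (0 : ℝ) < #A := (Real.rpow_pos_of_pos two_pos _).trans_le hA
  have hA0 : A.Nonempty := card_pos.1 (mod_cast hcard)
  have mean_nonneg : 0 ≤ meanDistUniform m A :=
    div_nonneg (sum_nonneg fun M _ ↦ sum_nonneg fun z _ ↦ abs_nonneg _) (by positivity)
  set x : ℝ := 144 * c ^ 2 * m / n ^ 2
  have hx0 : 0 ≤ x := by positivity
  rw [show 1152 * c ^ 2 * m / n ^ 2 = 8 * x by ring]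
  rcases le_total x (1 / 2) with hx | hx
  · calc meanDistUniform m A ^ 2
        ≤ ∑ k ∈ range m, matchingRatio m n (k + 1) * levelWeight A (2 * (k + 1)) :=
          meanDistUniform_sq_le (by lia) hA0
      _ ≤ ∑ k ∈ range m, x * (1 / 2) ^ k := sum_le_sum fun k hk ↦
          matchingRatio_mul_levelWeight_le hmn hc hA hx (mem_range.1 hk)
      _ ≤ x * 2 := by
          rw [← mul_sum]
          gcongr
          exact sum_geometric_two_le m
      _ ≤ 8 * x := by linarith
  · calc meanDistUniform m A ^ 2
        ≤ 2 ^ 2 := by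
          gcongr
          exact meanDistUniform_le_two hA0
      _ ≤ 8 * x := by linarith

end Estimates

/-- Main theorem: there is a universal constant `γ > 0` such that whenever `X` is uniform
over `A ⊆ {0,1}^n` with `|A| ≥ 2^{n-c}`, `c ≥ 1`, `α = m/n ∈ (0,1/4]`, and
`c ≤ γ·ε·√(n/α)`, the expected total variation distance between `p_M` and uniform,
over a uniform α-matching `M`, is at most `ε`. -/
theorem main_separation :
    ∃ γ : ℝ, 0 < γ ∧
      ∀ (n m : ℕ) (c ε : ℝ) (A : Finset (Fin n → ZMod 2)),
        0 < m → 4 * m ≤ n →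
        1 ≤ c → (2 : ℝ) ^ ((n : ℝ) - c) ≤ (A.card : ℝ) →
        0 < ε → c ≤ γ * ε * Real.sqrt ((n : ℝ) / ((m : ℝ) / (n : ℝ))) →
        (((Finset.univ.filter (fun M : Matrix (Fin m) (Fin n) (ZMod 2) =>
              IsMatchingMatrix M)).card : ℝ))⁻¹ *
          ∑ M ∈ Finset.univ.filter (fun M : Matrix (Fin m) (Fin n) (ZMod 2) =>
              IsMatchingMatrix M),
            ∑ z : Fin m → ZMod 2,
              |((A.filter fun x => M.mulVec x = z).card : ℝ) / (A.card : ℝ)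
                - ((2 : ℝ) ^ m)⁻¹|
        ≤ ε := by
  refine ⟨1 / 34, by norm_num, fun n m c ε A hm hmn hc hA hε hcε ↦ ?_⟩
  have : (0 : ℝ) < m := mod_cast hm
  have : (0 : ℝ) < n := mod_cast (by lia : 0 < n)
  have hcε_sq : c ^ 2 ≤ (1 / 34 * ε) ^ 2 * (n / (m / n)) := by
    simpa only [mul_pow, Real.sq_sqrt (show (0 : ℝ) ≤ n / (m / n) by positivity)] using
      pow_le_pow_left₀ (by linarith) hcε 2
  have mean_sq_le : meanDistUniform m A ^ 2 ≤ ε ^ 2 := by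
    calc meanDistUniform m A ^ 2
        ≤ 1152 * c ^ 2 * m / n ^ 2 := meanDistUniform_sq_le_of_rpow_le_card hmn hc hA
      _ ≤ 1152 * ((1 / 34 * ε) ^ 2 * (n / (m / n))) * m / n ^ 2 := by gcongr
      _ = 1152 / 34 ^ 2 * ε ^ 2 := by field
      _ ≤ ε ^ 2 := mul_le_of_le_one_left (sq_nonneg ε) (by norm_num)
  simpa only [meanDistUniform, distUniform, imageDist, matchings, Fintype.card_fin,
    inv_mul_eq_div] using le_of_abs_le (abs_le_of_sq_le_sq mean_sq_le hε.le)
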